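/- Let k ≥ 2, n1, n2 ≥ 1, and let x be a real number with x > λ(D_{k−1}). Set α = u_{k−1}^T (xI − D_{k−1})^{−1} u_{k−1}, β = u_{k−1}^T (xI − D_{k−1})^{−1} w_{k−1}, and γ = (1/2)(u_{k−1} − w_{k−1})^T (xI − D_{k−1})^{−1} (u_{k−1} − w_{k−1}). Then det(xI_{k+1} − B(n1,k,n2)) = [ (x+1)² − (n1+n2)(1+α)(x+1) + n1·n2·(1+α+k+β)(1−k+γ) ] · det(xI_{k−1} − D_{k−1}). -/

import Mathlib

open Matrix

noncomputable section

/-- Distance matrix of the path on `m` vertices: entry `(i,j)` is `|i - j|`. -/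
def pathD (m : ℕ) : Matrix (Fin m) (Fin m) ℝ := fun i j => |(i : ℝ) - (j : ℝ)|

/-- The vector `(1, 2, …, m)ᵀ`. -/
def uVec (m : ℕ) : Fin m → ℝ := fun i => (i : ℝ) + 1

/-- The reversed vector `(m, m-1, …, 1)ᵀ`. -/
def wVec (m : ℕ) : Fin m → ℝ := fun i => (m : ℝ) - (i : ℝ)

/-- Largest real eigenvalue of a matrix. -/
def maxEig {ι : Type} [Fintype ι] (A : Matrix ι ι ℝ) : ℝ :=
  sSup {μ : ℝ | ∃ v : ι → ℝ, v ≠ 0 ∧ A.mulVec v = μ • v}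

/-- The quotient matrix `B(n1,k,n2)` of the clique path distance matrix. -/
def quotB (n1 k n2 : ℕ) :
    Matrix (Unit ⊕ Fin (k - 1) ⊕ Unit) (Unit ⊕ Fin (k - 1) ⊕ Unit) ℝ :=
  fun p q =>
    match p, q with
    | Sum.inl _, Sum.inl _ => (n1 : ℝ) - 1
    | Sum.inl _, Sum.inr (Sum.inl j) => uVec (k - 1) j
    | Sum.inl _, Sum.inr (Sum.inr _) => (k : ℝ) * n2
    | Sum.inr (Sum.inl i), Sum.inl _ => (n1 : ℝ) * uVec (k - 1) i
    | Sum.inr (Sum.inl i), Sum.inr (Sum.inl j) => pathD (k - 1) i j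
    | Sum.inr (Sum.inl i), Sum.inr (Sum.inr _) => (n2 : ℝ) * wVec (k - 1) i
    | Sum.inr (Sum.inr _), Sum.inl _ => (k : ℝ) * n1
    | Sum.inr (Sum.inr _), Sum.inr (Sum.inl j) => wVec (k - 1) j
    | Sum.inr (Sum.inr _), Sum.inr (Sum.inr _) => (n2 : ℝ) - 1

/-!
Put `M = xI - D_{k-1}`. Taking the Schur complement of `M` in `xI - B` leaves the determinant
`(x + 1 - n₁(1 + uᵀM⁻¹u)) (x + 1 - n₂(1 + wᵀM⁻¹w)) - n₁n₂ (k + uᵀM⁻¹w) (k + wᵀM⁻¹u)`.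
Reversing the path fixes `D_{k-1}`, hence `M⁻¹`, and exchanges `u` and `w`. So `wᵀM⁻¹w = α`,
`wᵀM⁻¹u = β` and `γ = α - β`, and what remains is a difference of squares:
`(1 + α)² - (k + β)² = (1 + α + k + β)(1 - k + γ)`.
-/

section DoublyBordered

variable {ι R : Type*}

/-- The matrix `[[a, rᵀ, b], [p, M, q], [c, sᵀ, d]]`, that is, `M` bordered by one row and one
column on each side; `xI - B(n1,k,n2)` has this shape with `M = xI - D_{k-1}`. -/
def doublyBordered (a b c d : R) (r s p q : ι → R) (M : Matrix ι ι R) :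
    Matrix (Unit ⊕ ι ⊕ Unit) (Unit ⊕ ι ⊕ Unit) R
  | Sum.inl _, Sum.inl _ => a
  | Sum.inl _, Sum.inr (Sum.inl j) => r j
  | Sum.inl _, Sum.inr (Sum.inr _) => b
  | Sum.inr (Sum.inl i), Sum.inl _ => p i
  | Sum.inr (Sum.inl i), Sum.inr (Sum.inl j) => M i j
  | Sum.inr (Sum.inl i), Sum.inr (Sum.inr _) => q i
  | Sum.inr (Sum.inr _), Sum.inl _ => c
  | Sum.inr (Sum.inr _), Sum.inr (Sum.inl j) => s j
  | Sum.inr (Sum.inr _), Sum.inr (Sum.inr _) => d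

/-- The reordering of the index set of a doubly bordered matrix that puts the two border indices
first, so that block determinant formulas apply. -/
def borderFirstEquiv (ι : Type*) : Fin 2 ⊕ ι ≃ Unit ⊕ ι ⊕ Unit :=
  (Equiv.sumCongr (finTwoEquiv.trans Equiv.boolEquivPUnitSumPUnit) (Equiv.refl ι)).trans <|
    (Equiv.sumAssoc Unit Unit ι).trans <|
      Equiv.sumCongr (Equiv.refl Unit) (Equiv.sumComm Unit ι)

theorem doublyBordered_submatrix_borderFirstEquiv (a b c d : R) (r s p q : ι → R)
    (M : Matrix ι ι R) :
    (doublyBordered a b c d r s p q M).submatrix (borderFirstEquiv ι) (borderFirstEquiv ι) =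
      fromBlocks !![a, b; c, d] (of ![r, s]) (of ![p, q])ᵀ M := by
  ext (i | i) (j | j)
  · fin_cases i <;> fin_cases j <;> rfl
  · fin_cases i <;> rfl
  · fin_cases j <;> rfl
  · rfl

theorem det_doublyBordered [Fintype ι] [DecidableEq ι] [CommRing R] (a b c d : R)
    (r s p q : ι → R) {M : Matrix ι ι R} (hM : IsUnit M) :
    (doublyBordered a b c d r s p q M).det =
      ((a - r ⬝ᵥ M⁻¹ *ᵥ p) * (d - s ⬝ᵥ M⁻¹ *ᵥ q) - (b - r ⬝ᵥ M⁻¹ *ᵥ q) * (c - s ⬝ᵥ M⁻¹ *ᵥ p)) *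
        M.det := by
  let := hM.invertible
  have entry (f g : Fin 2 → ι → R) (i j : Fin 2) :
      (of f * M⁻¹ * (of g)ᵀ) i j = f i ⬝ᵥ M⁻¹ *ᵥ g j := by
    rw [Matrix.mul_assoc]
    rfl
  rw [← det_submatrix_equiv_self (borderFirstEquiv ι), doublyBordered_submatrix_borderFirstEquiv,
    det_fromBlocks₂₂, invOf_eq_nonsing_inv, mul_comm, det_fin_two]
  simp only [Matrix.sub_apply, entry]
  simp

end DoublyBordered

section PermutationInvariant

variable {ι R : Type*} [Fintype ι] {σ : Equiv.Perm ι}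

theorem smul_one_sub_inv_submatrix_perm [DecidableEq ι] [CommRing R] {A : Matrix ι ι R}
    (hA : A.submatrix σ σ = A) (x : R) :
    ((x • (1 : Matrix ι ι R) - A)⁻¹).submatrix σ σ = (x • (1 : Matrix ι ι R) - A)⁻¹ := by
  rw [← inv_submatrix_equiv, submatrix_sub, Pi.sub_apply, Pi.sub_apply, submatrix_smul,
    Pi.smul_apply, Pi.smul_apply, submatrix_one_equiv, hA]

theorem comp_perm_dotProduct_mulVec_comp_perm [NonUnitalNonAssocSemiring R] {N : Matrix ι ι R}
    (hN : N.submatrix σ σ = N) (u v : ι → R) :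
    (u ∘ σ) ⬝ᵥ N *ᵥ (v ∘ σ) = u ⬝ᵥ N *ᵥ v := by
  nth_rw 1 [← hN]
  rw [submatrix_mulVec_equiv, Function.comp_assoc, Equiv.self_comp_symm, Function.comp_id,
    comp_equiv_dotProduct_comp_equiv]

theorem comp_perm_dotProduct_mulVec [NonUnitalNonAssocSemiring R] {N : Matrix ι ι R}
    (hN : N.submatrix σ σ = N) (hσ : Function.Involutive σ) (u v : ι → R) :
    (u ∘ σ) ⬝ᵥ N *ᵥ v = u ⬝ᵥ N *ᵥ (v ∘ σ) := by
  rw [← comp_perm_dotProduct_mulVec_comp_perm hN u, Function.comp_assoc, hσ.comp_self,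
    Function.comp_id]

theorem sub_comp_perm_dotProduct_mulVec_self [NonAssocRing R] {N : Matrix ι ι R}
    (hN : N.submatrix σ σ = N) (hσ : Function.Involutive σ) (u : ι → R) :
    (u - u ∘ σ) ⬝ᵥ N *ᵥ (u - u ∘ σ) = 2 * (u ⬝ᵥ N *ᵥ u - u ⬝ᵥ N *ᵥ (u ∘ σ)) := by
  rw [mulVec_sub, dotProduct_sub, sub_dotProduct, sub_dotProduct,
    comp_perm_dotProduct_mulVec_comp_perm hN, comp_perm_dotProduct_mulVec hN hσ, two_mul]
  abel

end PermutationInvariant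

theorem maxEig_eq_sSup_spectrum {ι : Type} [Fintype ι] [DecidableEq ι] (A : Matrix ι ι ℝ) :
    maxEig A = sSup (spectrum ℝ A) := by
  unfold maxEig
  congr 1 with μ
  rw [← spectrum_toLin', ← Module.End.hasEigenvalue_iff_mem_spectrum,
    Module.End.hasEigenvalue_iff, Submodule.ne_bot_iff]
  simp only [Set.mem_ofPred_eq, Module.End.mem_eigenspace_iff, toLin'_apply, and_comm]

theorem notMem_spectrum_of_maxEig_lt {ι : Type} [Fintype ι] [DecidableEq ι] {A : Matrix ι ι ℝ}
    {x : ℝ} (hx : maxEig A < x) : x ∉ spectrum ℝ A :=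
  notMem_of_csSup_lt (maxEig_eq_sSup_spectrum A ▸ hx) A.finite_real_spectrum.bddAbove

theorem wVec_comp_revPerm (m : ℕ) : wVec m ∘ Fin.revPerm = uVec m := by
  ext i
  simp only [Function.comp_apply, Fin.revPerm_apply, wVec, uVec, Fin.val_rev,
    Nat.cast_sub i.isLt, Nat.cast_succ]
  ring

theorem uVec_comp_revPerm (m : ℕ) : uVec m ∘ Fin.revPerm = wVec m := by
  ext i
  simp [← wVec_comp_revPerm]

theorem pathD_submatrix_revPerm (m : ℕ) :
    (pathD m).submatrix Fin.revPerm Fin.revPerm = pathD m := by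
  ext i j
  simp only [submatrix_apply, Fin.revPerm_apply, pathD, Fin.val_rev, Nat.cast_sub (Fin.isLt _),
    Nat.cast_succ]
  rw [abs_sub_comm]
  congr 1
  ring

theorem smul_one_sub_quotB (n1 k n2 : ℕ) (x : ℝ) :
    x • 1 - quotB n1 k n2 =
      doublyBordered (x + 1 - n1) (-(k * n2)) (-(k * n1)) (x + 1 - n2) (-uVec (k - 1))
        (-wVec (k - 1)) (-((n1 : ℝ) • uVec (k - 1))) (-((n2 : ℝ) • wVec (k - 1)))
        (x • 1 - pathD (k - 1)) := by
  ext (_ | i | _) (_ | j | _) <;>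
    simp [quotB, doublyBordered, one_apply, ← sub_add, sub_add_eq_add_sub]

-- Indexed by `m = k - 1`, since `k - 1` is truncated in `quotB`.
theorem det_quotB_factorization_general
    (m n1 n2 : ℕ) (x : ℝ) (hx : x ∉ spectrum ℝ (pathD m))
    (α β γ : ℝ)
    (hα : α = uVec m ⬝ᵥ (x • (1 : Matrix (Fin m) (Fin m) ℝ) - pathD m)⁻¹ *ᵥ uVec m)
    (hβ : β = uVec m ⬝ᵥ (x • (1 : Matrix (Fin m) (Fin m) ℝ) - pathD m)⁻¹ *ᵥ wVec m)
    (hγ : γ = (1 / 2) * ((uVec m - wVec m) ⬝ᵥ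
      (x • (1 : Matrix (Fin m) (Fin m) ℝ) - pathD m)⁻¹ *ᵥ (uVec m - wVec m))) :
    (x • 1 - quotB n1 (m + 1) n2).det =
      ((x + 1) ^ 2 - ((n1 : ℝ) + n2) * (1 + α) * (x + 1)
          + (n1 : ℝ) * n2 * (1 + α + (m + 1 : ℕ) + β) * (1 - (m + 1 : ℕ) + γ)) *
        (x • (1 : Matrix (Fin m) (Fin m) ℝ) - pathD m).det := by
  have hM : IsUnit (x • (1 : Matrix (Fin m) (Fin m) ℝ) - pathD m) := by
    rwa [spectrum.notMem_iff, Algebra.algebraMap_eq_smul_one] at hx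
  have hN := smul_one_sub_inv_submatrix_perm (pathD_submatrix_revPerm m) x
  have hww := comp_perm_dotProduct_mulVec_comp_perm hN (uVec m) (uVec m)
  have hwu := comp_perm_dotProduct_mulVec hN Fin.rev_involutive (uVec m) (uVec m)
  have hsub := sub_comp_perm_dotProduct_mulVec_self hN Fin.rev_involutive (uVec m)
  rw [uVec_comp_revPerm, ← hα] at hww
  rw [uVec_comp_revPerm, ← hβ] at hwu
  rw [uVec_comp_revPerm, ← hα, ← hβ] at hsub
  have hγ' : γ = α - β := by rw [hγ, hsub]; ring
  rw [smul_one_sub_quotB, Nat.add_sub_cancel, det_doublyBordered _ _ _ _ _ _ _ _ hM]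
  simp only [mulVec_neg, mulVec_smul, dotProduct_neg, neg_dotProduct, dotProduct_smul,
    smul_eq_mul, ← hα, ← hβ, hww, hwu, hγ']
  ring

/-- Factorization of the characteristic polynomial of the quotient matrix `B(n1,k,n2)`:
for `x > λ(D_{k-1})`,
`det(xI − B) = [(x+1)² − (n1+n2)(1+α)(x+1) + n1·n2·(1+α+k+β)(1−k+γ)] · det(xI − D_{k-1})`. -/
theorem det_quotB_factorization
    (k n1 n2 : ℕ) (hk : 2 ≤ k) (hn1 : 1 ≤ n1) (hn2 : 1 ≤ n2)
    (x : ℝ) (hx : maxEig (pathD (k - 1)) < x)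
    (α β γ : ℝ)
    (hα : α = uVec (k - 1) ⬝ᵥ
        ((x • (1 : Matrix (Fin (k - 1)) (Fin (k - 1)) ℝ) - pathD (k - 1))⁻¹).mulVec
          (uVec (k - 1)))
    (hβ : β = uVec (k - 1) ⬝ᵥ
        ((x • (1 : Matrix (Fin (k - 1)) (Fin (k - 1)) ℝ) - pathD (k - 1))⁻¹).mulVec
          (wVec (k - 1)))
    (hγ : γ = (1 / 2) *
        ((uVec (k - 1) - wVec (k - 1)) ⬝ᵥ
          ((x • (1 : Matrix (Fin (k - 1)) (Fin (k - 1)) ℝ) - pathD (k - 1))⁻¹).mulVec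
            (uVec (k - 1) - wVec (k - 1)))) :
    (x • (1 : Matrix (Unit ⊕ Fin (k - 1) ⊕ Unit) (Unit ⊕ Fin (k - 1) ⊕ Unit) ℝ)
        - quotB n1 k n2).det =
      ((x + 1) ^ 2 - ((n1 : ℝ) + n2) * (1 + α) * (x + 1)
          + (n1 : ℝ) * n2 * (1 + α + k + β) * (1 - k + γ)) *
        (x • (1 : Matrix (Fin (k - 1)) (Fin (k - 1)) ℝ) - pathD (k - 1)).det := by
  obtain ⟨m, rfl⟩ := Nat.exists_eq_add_of_le' (one_le_two.trans hk)
  exact det_quotB_factorization_general m n1 n2 x (notMem_spectrum_of_maxEig_lt hx) α β γ hα hβ hγ
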